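/- Let Δx, Δy, Δz > 0 and v^x, v^y, v^z ∈ ℝ (arbitrary signs). Let a, b, c : ℤ³ → ℝ be grid functions as in the context, and assume the discrete circulation vanishes on every face: for all i,j,k, (b(i,j,k) − b(i−1,j,k))/Δx = (a(i,j,k) − a(i,j−1,k))/Δy and (c(i,j,k) − c(i−1,j,k))/Δx = (a(i,j,k) − a(i,j,k−1))/Δz. Define the locally Lax-Friedrichs vertex potential φ(i,j,k) = (v^x/2)(a(i+1,j,k) + a(i,j,k)) − (|v^x|/2)(a(i+1,j,k) − a(i,j,k)) + (v^y/2)(b(i,j+1,k) + b(i,j,k)) − (|v^y|/2)(b(i,j+1,k) − b(i,j,k)) + (v^z/2)(c(i,j,k+1) + c(i,j,k)) − (|v^z|/2)(c(i,j,k+1) − c(i,j,k)). Then for all i,j,k: (φ(i,j,k) − φ(i−1,j,k))/Δx = (v^x/(2Δx))(a(i+1,j,k) − a(i−1,j,k)) + (v^y/(2Δy))(a(i,j+1,k) − a(i,j−1,k)) + (v^z/(2Δz))(a(i,j,k+1) − a(i,j,k−1)) − (|v^x|/(2Δx))(a(i+1,j,k) − 2a(i,j,k) + a(i−1,j,k))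 − (|v^y|/(2Δy))(a(i,j+1,k) − 2a(i,j,k) + a(i,j−1,k)) − (|v^z|/(2Δz))(a(i,j,k+1) − 2a(i,j,k) + a(i,j,k−1)). -/

import Mathlib

/-- The locally Lax-Friedrichs vertex potential at vertex (i+1/2,j+1/2,k+1/2):
centered averages of the adjacent edge components plus upwind dissipation. -/
noncomputable def llfPot3 (vx vy vz : ℝ) (a b c : ℤ × ℤ × ℤ → ℝ) (i j k : ℤ) : ℝ :=
  vx / 2 * (a (i + 1, j, k) + a (i, j, k)) - |vx| / 2 * (a (i + 1, j, k) - a (i, j, k)) +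
    vy / 2 * (b (i, j + 1, k) + b (i, j, k)) - |vy| / 2 * (b (i, j + 1, k) - b (i, j, k)) +
    vz / 2 * (c (i, j, k + 1) + c (i, j, k)) - |vz| / 2 * (c (i, j, k + 1) - c (i, j, k))

/-!
The locally Lax-Friedrichs potential is a sum of one-dimensional fluxes, each linear in the pair of
edge values it averages, so its `x`-difference quotient is the same flux applied to the
`x`-difference quotients of `a`, `b`, `c`. Vanishing circulation turns the `x`-quotients of `b` and
`c` into the `y`- and `z`-quotients of `a`; the flux of two consecutive difference quotients of a
grid function is a centered difference minus a second-difference dissipation term.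
-/

section LaxFriedrichsFlux

variable {K : Type*} [Field K]

/-- The Lax-Friedrichs flux for linear advection with velocity `v`, between a left state `uL` and a
right state `uR`. The dissipation speed `s` is a separate parameter, so that no order on `K` is
needed; the upwind choice in `llfPot3` is `s = |v|`. In characteristic two `x / 2 = 0`, and the flux
is zero. -/
def laxFriedrichsFlux (v s uL uR : K) : K :=
  v / 2 * (uR + uL) - s / 2 * (uR - uL)

theorem laxFriedrichsFlux_sub (v s uL uR wL wR : K) :
    laxFriedrichsFlux v s (uL - wL) (uR - wR) =
      laxFriedrichsFlux v s uL uR - laxFriedrichsFlux v s wL wR := by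
  simp only [laxFriedrichsFlux]
  ring

theorem laxFriedrichsFlux_div (v s uL uR h : K) :
    laxFriedrichsFlux v s (uL / h) (uR / h) = laxFriedrichsFlux v s uL uR / h := by
  simp only [laxFriedrichsFlux]
  ring

theorem laxFriedrichsFlux_diffQuot (v s h u₀ u₁ u₂ : K) :
    laxFriedrichsFlux v s ((u₁ - u₀) / h) ((u₂ - u₁) / h) =
      v / (2 * h) * (u₂ - u₀) - s / (2 * h) * (u₂ - 2 * u₁ + u₀) := by
  simp only [laxFriedrichsFlux]
  ring

/-- With `w` and `w'` the edge values on two neighbouring grid lines at distance `h`, the hypotheses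
are the vanishing of the circulation on the two faces that share the edge carrying `u₁`. -/
theorem laxFriedrichsFlux_sub_div_of_circulation_eq_zero (v s : K) {h h' : K}
    {wL wR wL' wR' u₀ u₁ u₂ : K}
    (hL : (wL - wL') / h = (u₁ - u₀) / h') (hR : (wR - wR') / h = (u₂ - u₁) / h') :
    (laxFriedrichsFlux v s wL wR - laxFriedrichsFlux v s wL' wR') / h =
      v / (2 * h') * (u₂ - u₀) - s / (2 * h') * (u₂ - 2 * u₁ + u₀) := by
  rw [← laxFriedrichsFlux_sub, ← laxFriedrichsFlux_div, hL, hR, laxFriedrichsFlux_diffQuot]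

end LaxFriedrichsFlux

theorem llfPot3_eq_add_laxFriedrichsFlux (vx vy vz : ℝ) (a b c : ℤ × ℤ × ℤ → ℝ) (i j k : ℤ) :
    llfPot3 vx vy vz a b c i j k =
      laxFriedrichsFlux vx |vx| (a (i, j, k)) (a (i + 1, j, k)) +
        laxFriedrichsFlux vy |vy| (b (i, j, k)) (b (i, j + 1, k)) +
        laxFriedrichsFlux vz |vz| (c (i, j, k)) (c (i, j, k + 1)) := by
  simp only [llfPot3, laxFriedrichsFlux]
  ring

/-- on a discretely curl-free 3D mesh, the x-edge update built
from LLF vertex potentials equals a centered advection discretization plus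
dissipation terms (eqn. 3.36). -/
theorem stmt_13 (Δx Δy Δz : ℝ) (hΔx : 0 < Δx) (hΔy : 0 < Δy) (hΔz : 0 < Δz)
    (vx vy vz : ℝ) (a b c : ℤ × ℤ × ℤ → ℝ)
    (hcurlxy : ∀ i j k : ℤ,
      (b (i, j, k) - b (i - 1, j, k)) / Δx = (a (i, j, k) - a (i, j - 1, k)) / Δy)
    (hcurlxz : ∀ i j k : ℤ,
      (c (i, j, k) - c (i - 1, j, k)) / Δx = (a (i, j, k) - a (i, j, k - 1)) / Δz) :
    ∀ i j k : ℤ,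
      (llfPot3 vx vy vz a b c i j k - llfPot3 vx vy vz a b c (i - 1) j k) / Δx =
        vx / (2 * Δx) * (a (i + 1, j, k) - a (i - 1, j, k)) +
          vy / (2 * Δy) * (a (i, j + 1, k) - a (i, j - 1, k)) +
          vz / (2 * Δz) * (a (i, j, k + 1) - a (i, j, k - 1)) -
          |vx| / (2 * Δx) * (a (i + 1, j, k) - 2 * a (i, j, k) + a (i - 1, j, k)) -
          |vy| / (2 * Δy) * (a (i, j + 1, k) - 2 * a (i, j, k) + a (i, j - 1, k)) -
          |vz| / (2 * Δz) * (a (i, j, k + 1) - 2 * a (i, j, k) + a (i, j, k - 1)) := by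
  intro i j k
  have hyR :
      (b (i, j + 1, k) - b (i - 1, j + 1, k)) / Δx =
        (a (i, j + 1, k) - a (i, j, k)) / Δy := by
    simpa only [add_sub_cancel_right] using hcurlxy i (j + 1) k
  have hzR :
      (c (i, j, k + 1) - c (i - 1, j, k + 1)) / Δx =
        (a (i, j, k + 1) - a (i, j, k)) / Δz := by
    simpa only [add_sub_cancel_right] using hcurlxz i j (k + 1)
  rw [llfPot3_eq_add_laxFriedrichsFlux, llfPot3_eq_add_laxFriedrichsFlux, sub_add_cancel,
    add_sub_add_comm, add_sub_add_comm, add_div, add_div,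
    laxFriedrichsFlux_sub_div_of_circulation_eq_zero vx |vx| rfl rfl,
    laxFriedrichsFlux_sub_div_of_circulation_eq_zero vy |vy| (hcurlxy i j k) hyR,
    laxFriedrichsFlux_sub_div_of_circulation_eq_zero vz |vz| (hcurlxz i j k) hzR]
  ring
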